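/- For Ψ ∈ Λ^k(U,𝔥) and Φ ∈ Λ¹(U,𝔥), one has (Φ∧Φ) ∧^{,} Ψ = Φ ∧^{,} (Φ ∧^{[,]} Ψ) + α(Φ) ∧^▷ (Φ ∧^{,} Ψ). -/

import Mathlib

open scoped TensorProduct

noncomputable section

/-- `V`-valued `k`-forms on `ℝⁿ` (to be considered on an open set `U ⊆ ℝⁿ`):
fields of alternating `k`-multilinear maps, i.e. `Λᵏ(U, V)`. -/
abbrev Form (n k : ℕ) (V : Type*) [AddCommGroup V] [Module ℝ V] :=
  (Fin n → ℝ) → ((Fin n → ℝ) [⋀^Fin k]→ₗ[ℝ] V)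

/-- A form is smooth on `U` if all of its scalar components are `C^∞` on `U`. -/
def SmoothFormOn {n k : ℕ} {V : Type*} [NormedAddCommGroup V] [NormedSpace ℝ V]
    (U : Set (Fin n → ℝ)) (ω : Form n k V) : Prop :=
  ∀ v : Fin k → (Fin n → ℝ), ContDiffOn ℝ (⊤ : ℕ∞) (fun x => ω x v) U

/-- Wedge product of vector valued forms along a bilinear pairing `β`:
writing `ω = Σ ωᵃ Xₐ` and `η = Σ ηᵇ Y_b`, `ω ∧^β η = Σ ωᵃ ∧ ηᵇ β Xₐ Y_b`. -/
def wedgeB {n k l : ℕ} {V W X : Type*} [AddCommGroup V] [Module ℝ V]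
    [AddCommGroup W] [Module ℝ W] [AddCommGroup X] [Module ℝ X]
    (β : V →ₗ[ℝ] W →ₗ[ℝ] X) (ω : Form n k V) (η : Form n l W) : Form n (k + l) X :=
  fun x => (TensorProduct.lift β).compAlternatingMap
    (((ω x).domCoprod (η x)).domDomCongr finSumFinEquiv)

/-- Apply a linear map (such as `α` or `δ`) to a vector valued form componentwise. -/
def mapV {n k : ℕ} {V W : Type*} [AddCommGroup V] [Module ℝ V]
    [AddCommGroup W] [Module ℝ W] (f : V →ₗ[ℝ] W) (ω : Form n k V) : Form n k W :=
  fun x => f.compAlternatingMap (ω x)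

/-- Reinterpret a `k`-form as an `l`-form along a proof of `k = l`. -/
def castD {n k l : ℕ} {V : Type*} [AddCommGroup V] [Module ℝ V]
    (h : k = l) (ω : Form n k V) : Form n l V :=
  fun x => (ω x).domDomCongr (finCongr h)

/-- The commutator bracket `[x, y] = x*y - y*x` of a matrix (associative) algebra,
as a bilinear map. -/
def lieB (H : Type*) [Ring H] [Algebra ℝ H] : H →ₗ[ℝ] H →ₗ[ℝ] H :=
  LinearMap.mul ℝ H - (LinearMap.mul ℝ H).flip

/-- A differential 2-crossed module `𝔩 →δ 𝔥 →α 𝔤` of matrix Lie algebras (realized as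
associative `ℝ`-algebras, with the commutator bracket `⁅x, y⁆ = x*y - y*x`), with
left actions `▷` of `𝔤` on `𝔥` and on `𝔩` by derivations (and on `𝔤` by the adjoint
action) and a `𝔤`-equivariant bilinear Peiffer lifting `{,} : 𝔥 × 𝔥 → 𝔩`. -/
structure TwoCrossed (𝔤 𝔥 𝔩 : Type*) [Ring 𝔤] [Algebra ℝ 𝔤] [Ring 𝔥] [Algebra ℝ 𝔥]
    [Ring 𝔩] [Algebra ℝ 𝔩] where
  /-- the Lie algebra homomorphism `δ : 𝔩 → 𝔥` -/
  δ : 𝔩 →ₗ[ℝ] 𝔥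
  /-- the Lie algebra homomorphism `α : 𝔥 → 𝔤` -/
  α : 𝔥 →ₗ[ℝ] 𝔤
  /-- the action `▷` of `𝔤` on `𝔥` -/
  ρ𝔥 : 𝔤 →ₗ[ℝ] 𝔥 →ₗ[ℝ] 𝔥
  /-- the action `▷` of `𝔤` on `𝔩` -/
  ρ𝔩 : 𝔤 →ₗ[ℝ] 𝔩 →ₗ[ℝ] 𝔩
  /-- the Peiffer lifting `{,} : 𝔥 × 𝔥 → 𝔩` -/
  pf : 𝔥 →ₗ[ℝ] 𝔥 →ₗ[ℝ] 𝔩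
  δ_lie : ∀ x y : 𝔩, δ ⁅x, y⁆ = ⁅δ x, δ y⁆
  α_lie : ∀ u v : 𝔥, α ⁅u, v⁆ = ⁅α u, α v⁆
  /-- `𝔤` acts on `𝔥` by derivations -/
  ρ𝔥_deriv : ∀ (X : 𝔤) (u v : 𝔥), ρ𝔥 X ⁅u, v⁆ = ⁅ρ𝔥 X u, v⁆ + ⁅u, ρ𝔥 X v⁆
  /-- `▷` is a Lie algebra action of `𝔤` on `𝔥` -/
  ρ𝔥_lie : ∀ (X Y : 𝔤) (u : 𝔥), ρ𝔥 ⁅X, Y⁆ u = ρ𝔥 X (ρ𝔥 Y u) - ρ𝔥 Y (ρ𝔥 X u)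
  /-- `𝔤` acts on `𝔩` by derivations -/
  ρ𝔩_deriv : ∀ (X : 𝔤) (x y : 𝔩), ρ𝔩 X ⁅x, y⁆ = ⁅ρ𝔩 X x, y⁆ + ⁅x, ρ𝔩 X y⁆
  /-- `▷` is a Lie algebra action of `𝔤` on `𝔩` -/
  ρ𝔩_lie : ∀ (X Y : 𝔤) (x : 𝔩), ρ𝔩 ⁅X, Y⁆ x = ρ𝔩 X (ρ𝔩 Y x) - ρ𝔩 Y (ρ𝔩 X x)
  /-- the Peiffer lifting is `𝔤`-equivariant: `X ▷ {u,v} = {X ▷ u, v} + {u, X ▷ v}` -/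
  pf_equivariant : ∀ (X : 𝔤) (u v : 𝔥), ρ𝔩 X (pf u v) = pf (ρ𝔥 X u) v + pf u (ρ𝔥 X v)
  /-- `δ` is `𝔤`-equivariant -/
  δ_equivariant : ∀ (X : 𝔤) (x : 𝔩), δ (ρ𝔩 X x) = ρ𝔥 X (δ x)
  /-- `α` is `𝔤`-equivariant (`𝔤` acting on itself by the adjoint action) -/
  α_equivariant : ∀ (X : 𝔤) (u : 𝔥), α (ρ𝔥 X u) = ⁅X, α u⁆
  /-- `𝔩 →δ 𝔥 →α 𝔤` is a complex -/
  comp_zero : ∀ x : 𝔩, α (δ x) = 0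
  /-- axiom (2): `δ{u, v} = ⟨u, v⟩ = [u, v] - α(u) ▷ v` -/
  ax2 : ∀ u v : 𝔥, δ (pf u v) = ⁅u, v⁆ - ρ𝔥 (α u) v
  /-- axiom (3): `[x, y] = {δ x, δ y}` for `x, y ∈ 𝔩` -/
  ax3 : ∀ x y : 𝔩, pf (δ x) (δ y) = ⁅x, y⁆
  /-- axiom (4): `{[u,v], w} = α(u)▷{v,w} + {u,[v,w]} - α(v)▷{u,w} - {v,[u,w]}` -/
  ax4 : ∀ u v w : 𝔥, pf ⁅u, v⁆ w =
    ρ𝔩 (α u) (pf v w) + pf u ⁅v, w⁆ - ρ𝔩 (α v) (pf u w) - pf v ⁅u, w⁆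
  /-- axiom (5): `{u, [v,w]} = {δ{u,v}, w} - {δ{u,w}, v}` -/
  ax5 : ∀ u v w : 𝔥, pf u ⁅v, w⁆ = pf (δ (pf u v)) w - pf (δ (pf u w)) v
  /-- axiom (6): `{δ x, v} + {v, δ x} = -α(v) ▷ x` -/
  ax6 : ∀ (x : 𝔩) (v : 𝔥), pf (δ x) v + pf v (δ x) = - ρ𝔩 (α v) x

namespace TwoCrossed

variable {𝔤 𝔥 𝔩 : Type*} [Ring 𝔤] [Algebra ℝ 𝔤] [Ring 𝔥] [Algebra ℝ 𝔥] [Ring 𝔩] [Algebra ℝ 𝔩]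

/-- The Peiffer commutator pairing `⟨u, v⟩ := [u, v] - α(u) ▷ v`, bilinearly. -/
def ang (T : TwoCrossed 𝔤 𝔥 𝔩) : 𝔥 →ₗ[ℝ] 𝔥 →ₗ[ℝ] 𝔥 :=
  (LinearMap.mul ℝ 𝔥 - (LinearMap.mul ℝ 𝔥).flip) - T.ρ𝔥 ∘ₗ T.α

/-- The action `v ▷' x := -{δ x, v}` of `𝔥` on `𝔩`, bilinearly. -/
def rhoPrime (T : TwoCrossed 𝔤 𝔥 𝔩) : 𝔥 →ₗ[ℝ] 𝔩 →ₗ[ℝ] 𝔩 :=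
  - (T.pf ∘ₗ T.δ).flip

end TwoCrossed

/-
Every form over a field of characteristic zero is an alternatization, and the wedge product of two
alternatizations is the alternatization of the concatenation product. Hence the wedge product is
associative as soon as the pairings are, and `ω ∧^β ω` for `ω` of odd degree depends only on the
antisymmetrization of `β`, because swapping two blocks of the same odd length is an odd permutation.

Regard `{uv, w}` and `{u, [v, w]} + α(u) ▷ {v, w}` as bilinear in `(u, v)` with values in
`Hom(𝔥, 𝔩)`. Axiom (4) says precisely that these two pairings have the same antisymmetrization, so
they agree on `Φ ∧ Φ`; evaluating on `Ψ` and reassociating gives the identity.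
-/

section Concatenation

variable {R M V W X Y P Q : Type*} [CommSemiring R] [AddCommMonoid M] [Module R M]
  [AddCommMonoid V] [Module R V] [AddCommMonoid W] [Module R W] [AddCommMonoid X] [Module R X]
  [AddCommMonoid Y] [Module R Y] [AddCommMonoid P] [Module R P] [AddCommMonoid Q] [Module R Q]
  {k l m : ℕ}

/-- The concatenation product of multilinear maps along a bilinear pairing `β`: the first `k`
arguments are fed to `a`, the last `l` to `b`. It is the multilinear map underlying the wedge
product `wedgeB β`. -/
def concatAlong (β : V →ₗ[R] W →ₗ[R] X) (a : MultilinearMap R (fun _ : Fin k => M) V)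
    (b : MultilinearMap R (fun _ : Fin l => M) W) : MultilinearMap R (fun _ : Fin (k + l) => M) X :=
  (TensorProduct.lift β).compMultilinearMap ((a.domCoprod b).domDomCongr finSumFinEquiv)

@[simp]
theorem concatAlong_apply (β : V →ₗ[R] W →ₗ[R] X)
    (a : MultilinearMap R (fun _ : Fin k => M) V) (b : MultilinearMap R (fun _ : Fin l => M) W)
    (v : Fin (k + l) → M) :
    concatAlong β a b v = β (a fun i => v (Fin.castAdd l i)) (b fun i => v (Fin.natAdd k i)) := by
  simp [concatAlong]

theorem concatAlong_assoc {γ : V →ₗ[R] W →ₗ[R] P} {β : P →ₗ[R] Y →ₗ[R] X}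
    {γ' : W →ₗ[R] Y →ₗ[R] Q} {β' : V →ₗ[R] Q →ₗ[R] X}
    (h : ∀ u v w, β (γ u v) w = β' u (γ' v w))
    (a : MultilinearMap R (fun _ : Fin k => M) V) (b : MultilinearMap R (fun _ : Fin l => M) W)
    (c : MultilinearMap R (fun _ : Fin m => M) Y) :
    (concatAlong β (concatAlong γ a b) c).domDomCongr (finCongr (Nat.add_assoc k l m)) =
      concatAlong β' a (concatAlong γ' b c) := by
  have hassoc (i : Fin m) : finCongr (Nat.add_assoc k l m) (Fin.natAdd (k + l) i) =
      Fin.natAdd k (Fin.natAdd l i) :=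
    Fin.ext (Nat.add_assoc k l i)
  refine MultilinearMap.ext fun (v : Fin (k + (l + m)) → M) => ?_
  simp only [MultilinearMap.domDomCongr_apply, concatAlong_apply, h, hassoc]
  rfl

theorem concatAlong_flip (β : V →ₗ[R] W →ₗ[R] X)
    (a : MultilinearMap R (fun _ : Fin k => M) V) (b : MultilinearMap R (fun _ : Fin l => M) W) :
    concatAlong β.flip b a = (concatAlong β a b).domDomCongr finAddFlip := by
  refine MultilinearMap.ext fun (v : Fin (l + k) → M) => ?_
  simp only [concatAlong_apply, MultilinearMap.domDomCongr_apply, LinearMap.flip_apply,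
    finAddFlip_apply_castAdd, finAddFlip_apply_natAdd]

end Concatenation

section Alternatization

variable {R M N ι ι' : Type*} [CommSemiring R] [AddCommMonoid M] [Module R M]
  [AddCommGroup N] [Module R N] [Fintype ι] [DecidableEq ι] [Fintype ι'] [DecidableEq ι']

theorem alternatization_domDomCongr (e : ι ≃ ι') (m : MultilinearMap R (fun _ : ι => M) N) :
    (m.domDomCongr e).alternatization = m.alternatization.domDomCongr e := by
  ext v
  simp only [MultilinearMap.alternatization_apply, AlternatingMap.domDomCongr_apply]
  refine (Fintype.sum_equiv e.permCongr _ _ fun σ => ?_).symm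
  simp [Equiv.Perm.sign_permCongr, Function.comp_def]

theorem exists_alternatization_eq {K M N : Type*} [Field K] [CharZero K] [AddCommMonoid M]
    [Module K M] [AddCommGroup N] [Module K N] (f : M [⋀^ι]→ₗ[K] N) :
    ∃ m : MultilinearMap K (fun _ : ι => M) N, m.alternatization = f := by
  have hc : ((Fintype.card ι).factorial : K) ≠ 0 := Nat.cast_ne_zero.2 (Nat.factorial_ne_zero _)
  refine ⟨(((Fintype.card ι).factorial : K)⁻¹ • f : M [⋀^ι]→ₗ[K] N), ?_⟩
  rw [AlternatingMap.coe_alternatization, ← Nat.cast_smul_eq_nsmul K, smul_inv_smul₀ hc]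

theorem alternatization_concatAlong {k l : ℕ} {V W X : Type*} [AddCommGroup V] [Module R V]
    [AddCommGroup W] [Module R W] [AddCommGroup X] [Module R X]
    (β : V →ₗ[R] W →ₗ[R] X)
    (a : MultilinearMap R (fun _ : Fin k => M) V) (b : MultilinearMap R (fun _ : Fin l => M) W) :
    (concatAlong β a b).alternatization = (TensorProduct.lift β).compAlternatingMap
      ((a.alternatization.domCoprod b.alternatization).domDomCongr finSumFinEquiv) := by
  rw [concatAlong, LinearMap.compMultilinearMap_alternatization, alternatization_domDomCongr,
    MultilinearMap.domCoprod_alternization]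

end Alternatization

section Sign

open Equiv.Perm

theorem sign_sumComm_self (ι : Type*) [Fintype ι] [DecidableEq ι] :
    sign (Equiv.sumComm ι ι) = (-1) ^ Fintype.card ι := by
  calc sign (Equiv.sumComm ι ι)
      = sign (Equiv.prodCongrLeft fun _ : ι => Equiv.swap false true) :=
        (sign_eq_sign_of_equiv _ _ (Equiv.boolProdEquivSum ι)
          (by rintro ⟨_ | _, _⟩ <;> rfl)).symm
    _ = (-1) ^ Fintype.card ι := by
        simp [sign_prodCongrLeft]

theorem sign_finAddFlip_self (k : ℕ) :
    sign (finAddFlip : Fin (k + k) ≃ Fin (k + k)) = (-1) ^ k := by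
  rw [finAddFlip, Equiv.trans_assoc]
  simp [sign_sumComm_self]

end Sign

section Wedge

variable {n k l m : ℕ} {V W X Y P Q : Type*} [AddCommGroup V] [Module ℝ V]
  [AddCommGroup W] [Module ℝ W] [AddCommGroup X] [Module ℝ X] [AddCommGroup Y] [Module ℝ Y]
  [AddCommGroup P] [Module ℝ P] [AddCommGroup Q] [Module ℝ Q]

theorem castD_add (h : k = l) (ω ω' : Form n k V) :
    castD h (ω + ω') = castD h ω + castD h ω' :=
  rfl

theorem wedgeB_apply_eq_alternatization (β : V →ₗ[ℝ] W →ₗ[ℝ] X) {ω : Form n k V}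
    {η : Form n l W} {x : Fin n → ℝ} {a : MultilinearMap ℝ (fun _ : Fin k => Fin n → ℝ) V}
    {b : MultilinearMap ℝ (fun _ : Fin l => Fin n → ℝ) W}
    (ha : a.alternatization = ω x) (hb : b.alternatization = η x) :
    wedgeB β ω η x = (concatAlong β a b).alternatization := by
  rw [alternatization_concatAlong, ha, hb, wedgeB]

theorem wedgeB_add_pairing (β β' : V →ₗ[ℝ] W →ₗ[ℝ] X) (ω : Form n k V) (η : Form n l W) :
    wedgeB (β + β') ω η = wedgeB β ω η + wedgeB β' ω η := by
  ext x v
  exact LinearMap.congr_fun (map_add (TensorProduct.uncurry (.id ℝ) V W X) β β') _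

theorem wedgeB_add_left (β : V →ₗ[ℝ] W →ₗ[ℝ] X) (ω ω' : Form n k V) (η : Form n l W) :
    wedgeB β (ω + ω') η = wedgeB β ω η + wedgeB β ω' η := by
  ext x v
  simp [wedgeB, ← AlternatingMap.domCoprod'_apply, TensorProduct.add_tmul]

theorem mapV_wedgeB (f : X →ₗ[ℝ] Y) (β : V →ₗ[ℝ] W →ₗ[ℝ] X) (ω : Form n k V) (η : Form n l W) :
    mapV f (wedgeB β ω η) = wedgeB (β.compr₂ f) ω η := by
  ext x v
  simp [mapV, wedgeB, TensorProduct.lift_compr₂]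

theorem wedgeB_mapV_left (f : V →ₗ[ℝ] W) (β : W →ₗ[ℝ] X →ₗ[ℝ] Y) (ω : Form n k V)
    (η : Form n l X) : wedgeB β (mapV f ω) η = wedgeB (β ∘ₗ f) ω η := by
  funext x
  obtain ⟨a, ha⟩ := exists_alternatization_eq (ω x)
  obtain ⟨b, hb⟩ := exists_alternatization_eq (η x)
  have hfa : (f.compMultilinearMap a).alternatization = mapV f ω x := by
    rw [LinearMap.compMultilinearMap_alternatization, ha, mapV]
  have hconcat : concatAlong β (f.compMultilinearMap a) b = concatAlong (β ∘ₗ f) a b := by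
    ext v
    simp
  rw [wedgeB_apply_eq_alternatization β hfa hb, wedgeB_apply_eq_alternatization _ ha hb, hconcat]

theorem castD_wedgeB_assoc {γ : V →ₗ[ℝ] W →ₗ[ℝ] P} {β : P →ₗ[ℝ] Y →ₗ[ℝ] X}
    {γ' : W →ₗ[ℝ] Y →ₗ[ℝ] Q} {β' : V →ₗ[ℝ] Q →ₗ[ℝ] X}
    (h : ∀ u v w, β (γ u v) w = β' u (γ' v w))
    (ω : Form n k V) (η : Form n l W) (ζ : Form n m Y) :
    castD (Nat.add_assoc k l m) (wedgeB β (wedgeB γ ω η) ζ) = wedgeB β' ω (wedgeB γ' η ζ) := by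
  funext x
  obtain ⟨a, ha⟩ := exists_alternatization_eq (ω x)
  obtain ⟨b, hb⟩ := exists_alternatization_eq (η x)
  obtain ⟨c, hc⟩ := exists_alternatization_eq (ζ x)
  rw [castD, wedgeB_apply_eq_alternatization β
      (wedgeB_apply_eq_alternatization γ ha hb).symm hc,
    wedgeB_apply_eq_alternatization β' ha (wedgeB_apply_eq_alternatization γ' hb hc).symm,
    ← alternatization_domDomCongr, concatAlong_assoc h]

theorem wedgeB_flip (β : V →ₗ[ℝ] W →ₗ[ℝ] X) (ω : Form n k V) (η : Form n k W) :
    wedgeB β.flip η ω = (-1 : ℤˣ) ^ k • wedgeB β ω η := by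
  funext x
  obtain ⟨a, ha⟩ := exists_alternatization_eq (ω x)
  obtain ⟨b, hb⟩ := exists_alternatization_eq (η x)
  rw [Pi.smul_apply, wedgeB_apply_eq_alternatization β.flip hb ha,
    wedgeB_apply_eq_alternatization β ha hb, concatAlong_flip, alternatization_domDomCongr,
    AlternatingMap.domDomCongr_perm, sign_finAddFlip_self]

theorem wedgeB_flip_self_of_odd (hk : Odd k) (β : V →ₗ[ℝ] V →ₗ[ℝ] X) (ω : Form n k V) :
    wedgeB β.flip ω ω = -wedgeB β ω ω := by
  rw [wedgeB_flip, hk.neg_one_pow, Units.neg_smul, one_smul]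

theorem wedgeB_self_congr_of_odd (hk : Odd k) {β β' : V →ₗ[ℝ] V →ₗ[ℝ] X}
    (h : ∀ u v, β u v - β v u = β' u v - β' v u) (ω : Form n k V) :
    wedgeB β ω ω = wedgeB β' ω ω := by
  have hadd : β + β'.flip = β' + β.flip :=
    LinearMap.ext₂ fun u v => sub_eq_sub_iff_add_eq_add.1 (h u v)
  have hswap : wedgeB β ω ω - wedgeB β' ω ω = wedgeB β' ω ω - wedgeB β ω ω := by
    simpa only [wedgeB_add_pairing, wedgeB_flip_self_of_odd hk, ← sub_eq_add_neg] using
      congrArg (wedgeB · ω ω) hadd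
  have htwo : (2 : ℝ) • wedgeB β ω ω = (2 : ℝ) • wedgeB β' ω ω := by
    rw [two_smul, two_smul, sub_eq_sub_iff_add_eq_add.1 hswap]
  exact smul_right_injective _ two_ne_zero htwo

end Wedge

namespace TwoCrossed

variable {𝔤 𝔥 𝔩 : Type*} [Ring 𝔤] [Algebra ℝ 𝔤] [Ring 𝔥] [Algebra ℝ 𝔥] [Ring 𝔩] [Algebra ℝ 𝔩]

/-- The trilinear map `(u, v, w) ↦ {uv, w}`, where `uv` is the matrix product; it is the
coefficient of `(Φ ∧ Φ) ∧^{,} Ψ`. -/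
def pfMul (T : TwoCrossed 𝔤 𝔥 𝔩) : 𝔥 →ₗ[ℝ] 𝔥 →ₗ[ℝ] 𝔥 →ₗ[ℝ] 𝔩 :=
  (LinearMap.mul ℝ 𝔥).compr₂ T.pf

/-- The trilinear map `(u, v, w) ↦ {u, [v, w]}`, the coefficient of `Φ ∧^{,} (Φ ∧^{[,]} Ψ)`. -/
def pfLie (T : TwoCrossed 𝔤 𝔥 𝔩) : 𝔥 →ₗ[ℝ] 𝔥 →ₗ[ℝ] 𝔥 →ₗ[ℝ] 𝔩 :=
  (LinearMap.llcomp ℝ 𝔥 𝔥 𝔩).compl₁₂ T.pf (lieB 𝔥)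

/-- The trilinear map `(u, v, w) ↦ α(u) ▷ {v, w}`, the coefficient of
`α(Φ) ∧^▷ (Φ ∧^{,} Ψ)`. -/
def actPf (T : TwoCrossed 𝔤 𝔥 𝔩) : 𝔥 →ₗ[ℝ] 𝔥 →ₗ[ℝ] 𝔥 →ₗ[ℝ] 𝔩 :=
  (LinearMap.llcomp ℝ 𝔥 𝔩 𝔩).compl₁₂ (T.ρ𝔩 ∘ₗ T.α) T.pf

theorem pfMul_sub_swap (T : TwoCrossed 𝔤 𝔥 𝔩) (u v : 𝔥) :
    T.pfMul u v - T.pfMul v u = (T.pfLie + T.actPf) u v - (T.pfLie + T.actPf) v u := by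
  ext w
  have h4 := T.ax4 u v w
  simp only [Ring.lie_def, map_sub, LinearMap.sub_apply] at h4
  simp only [pfMul, pfLie, actPf, lieB, LinearMap.sub_apply, LinearMap.add_apply,
    LinearMap.flip_apply, LinearMap.compr₂_apply, LinearMap.compl₁₂_apply, LinearMap.llcomp_apply,
    LinearMap.mul_apply', LinearMap.comp_apply, map_sub, h4]
  abel

end TwoCrossed

theorem statement_5_general {n p k : ℕ} {𝔤 𝔥 𝔩 : Type*} [Ring 𝔤] [Algebra ℝ 𝔤] [Ring 𝔥]
    [Algebra ℝ 𝔥] [Ring 𝔩] [Algebra ℝ 𝔩] (T : TwoCrossed 𝔤 𝔥 𝔩) (Ψ : Form n k 𝔥) (Φ : Form n p 𝔥)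
    (hp : Odd p) :
    castD (Nat.add_assoc p p k) (wedgeB T.pf (wedgeB (LinearMap.mul ℝ 𝔥) Φ Φ) Ψ)
      = wedgeB T.pf Φ (wedgeB (lieB 𝔥) Φ Ψ)
          + wedgeB T.ρ𝔩 (mapV T.α Φ) (wedgeB T.pf Φ Ψ) := by
  have hmul : wedgeB T.pf (wedgeB (LinearMap.mul ℝ 𝔥) Φ Φ) Ψ
      = wedgeB LinearMap.id (wedgeB T.pfMul Φ Φ) Ψ := by
    rw [TwoCrossed.pfMul, ← mapV_wedgeB, wedgeB_mapV_left, LinearMap.id_comp]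
  have hanti : wedgeB T.pfMul Φ Φ = wedgeB T.pfLie Φ Φ + wedgeB T.actPf Φ Φ := by
    rw [wedgeB_self_congr_of_odd hp T.pfMul_sub_swap, wedgeB_add_pairing]
  have hlie : castD (Nat.add_assoc p p k) (wedgeB LinearMap.id (wedgeB T.pfLie Φ Φ) Ψ)
      = wedgeB T.pf Φ (wedgeB (lieB 𝔥) Φ Ψ) :=
    castD_wedgeB_assoc (fun _ _ _ => rfl) Φ Φ Ψ
  have hact : castD (Nat.add_assoc p p k) (wedgeB LinearMap.id (wedgeB T.actPf Φ Φ) Ψ)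
      = wedgeB T.ρ𝔩 (mapV T.α Φ) (wedgeB T.pf Φ Ψ) := by
    rw [wedgeB_mapV_left]
    exact castD_wedgeB_assoc (fun _ _ _ => rfl) Φ Φ Ψ
  rw [hmul, hanti, wedgeB_add_left, castD_add, hlie, hact]

/-- for `Ψ ∈ Λᵏ(U,𝔥)` and `Φ ∈ Λ¹(U,𝔥)`,
`(Φ∧Φ) ∧^{,} Ψ = Φ ∧^{,} (Φ ∧^[,] Ψ) + α(Φ) ∧^▷ (Φ ∧^{,} Ψ)`. -/
theorem statement_5 {n : ℕ} {U : Set (Fin n → ℝ)} (hU : IsOpen U)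
    {𝔤 𝔥 𝔩 : Type*} [NormedRing 𝔤] [NormedAlgebra ℝ 𝔤] [NormedRing 𝔥] [NormedAlgebra ℝ 𝔥]
    [NormedRing 𝔩] [NormedAlgebra ℝ 𝔩] (T : TwoCrossed 𝔤 𝔥 𝔩)
    {k : ℕ} (Ψ : Form n k 𝔥) (Φ : Form n 1 𝔥)
    (hΨ : SmoothFormOn U Ψ) (hΦ : SmoothFormOn U Φ) :
    ∀ x ∈ U, castD (show 1 + 1 + k = 1 + (1 + k) by omega)
        (wedgeB T.pf (wedgeB (LinearMap.mul ℝ 𝔥) Φ Φ) Ψ) x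
      = (wedgeB T.pf Φ (wedgeB (lieB 𝔥) Φ Ψ)
          + wedgeB T.ρ𝔩 (mapV T.α Φ) (wedgeB T.pf Φ Ψ)) x :=
  fun x _ => congrFun (statement_5_general T Ψ Φ odd_one) x

end
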